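/- Let d, D be positive integers, let Ω ⊆ ℝ^d be an open bounded set, U ⊆ ℝ^D open, and let L : Ω → U, g : U → ℝ^D, M : [0,∞) × U → ℝ^D and R : ℝ^D → ℝ^d be maps. Assume: (H1) (fiber contraction) there exist constants C₀ > 0, K > 0 such that ‖M(t, u) − M(t, g(u))‖ ≤ C₀ e^{−K t} for all t ≥ 0 and all u ∈ L(Ω); (H2) R is Lipschitz with constant C_R; (H3) (uniform transversality) there exist c > 0 and T > 0 such that for every t ∈ [0, T] the map A_t : Ω → ℝ^d, A_t(x) = R(M(t, g(L(x)))), satisfies the lower Lipschitz bound ‖A_t(x) − A_t(x')‖ ≥ c ‖x − x'‖ for all x, x' ∈ Ω. Then for all t_skip ≥ 0 and δ ≥ 0 with t_skip + δ ≤ T, and all x ∈ Ω, any y ∈ Ω satisfying the implicit coarse time-stepper equation R(M(t_skip, L(y))) = R(M(t_skip + δ, L(x))) and any y* ∈ Ω satisfying the exact slow-flow equation R(M(t_skip, g(L(y*)))) = R(M(t_skip + δ, g(L(x)))) obey the estimate ‖y − y*‖ ≤ (2 C_R C₀ / c) e^{−K t_skip}. -/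

import Mathlib

/-- Convergence of the implicitly defined coarse-level time stepper (value case):
under fiber contraction (H1), Lipschitz restriction (H2), and uniform lower
Lipschitz bound for the healed coarse map (H3), any solution `y` of the implicit
time-stepper equation is within `(2 C_R C₀ / c) e^{-K t_skip}` of the exact
slow-flow solution `y*`. -/
theorem implicit_time_stepper_convergence
    (d D : ℕ) (hd : 0 < d) (hD : 0 < D)
    (Ω : Set (EuclideanSpace ℝ (Fin d))) (hΩopen : IsOpen Ω)
    (hΩbdd : Bornology.IsBounded Ω)
    (U : Set (EuclideanSpace ℝ (Fin D))) (hUopen : IsOpen U)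
    (L : EuclideanSpace ℝ (Fin d) → EuclideanSpace ℝ (Fin D))
    (hLU : ∀ x ∈ Ω, L x ∈ U)
    (g : EuclideanSpace ℝ (Fin D) → EuclideanSpace ℝ (Fin D))
    (M : ℝ → EuclideanSpace ℝ (Fin D) → EuclideanSpace ℝ (Fin D))
    (R : EuclideanSpace ℝ (Fin D) → EuclideanSpace ℝ (Fin d))
    (C₀ K : ℝ) (hC₀ : 0 < C₀) (hK : 0 < K)
    (H1 : ∀ t : ℝ, 0 ≤ t → ∀ x ∈ Ω,
      ‖M t (L x) - M t (g (L x))‖ ≤ C₀ * Real.exp (-K * t))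
    (CR : ℝ) (hCR : 0 ≤ CR)
    (H2 : ∀ u v : EuclideanSpace ℝ (Fin D), ‖R u - R v‖ ≤ CR * ‖u - v‖)
    (c T : ℝ) (hc : 0 < c) (hT : 0 < T)
    (H3 : ∀ t ∈ Set.Icc (0 : ℝ) T, ∀ x ∈ Ω, ∀ x' ∈ Ω,
      c * ‖x - x'‖ ≤ ‖R (M t (g (L x))) - R (M t (g (L x')))‖)
    (tskip δ : ℝ) (htskip : 0 ≤ tskip) (hδ : 0 ≤ δ) (hTsum : tskip + δ ≤ T)
    (x : EuclideanSpace ℝ (Fin d)) (hx : x ∈ Ω)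
    (y : EuclideanSpace ℝ (Fin d)) (hy : y ∈ Ω)
    (hyeq : R (M tskip (L y)) = R (M (tskip + δ) (L x)))
    (ystar : EuclideanSpace ℝ (Fin d)) (hystar : ystar ∈ Ω)
    (hystareq : R (M tskip (g (L ystar))) = R (M (tskip + δ) (g (L x)))) :
    ‖y - ystar‖ ≤ (2 * CR * C₀ / c) * Real.exp (-K * tskip) := by
  have h3 := H3 tskip ⟨htskip, by linarith⟩ y hy ystar hystar
  have h1 := (H2 _ _).trans (mul_le_mul_of_nonneg_left (H1 tskip htskip y hy) hCR)
  have h2 := (H2 _ _).trans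
    (mul_le_mul_of_nonneg_left (H1 (tskip + δ) (by linarith) x hx) hCR)
  have he : Real.exp (-K * (tskip + δ)) ≤ Real.exp (-K * tskip) :=
    Real.exp_le_exp.mpr (by nlinarith [mul_nonneg hK.le hδ])
  have he' := mul_le_mul_of_nonneg_left (mul_le_mul_of_nonneg_left he hC₀.le) hCR
  rw [hystareq] at h3
  rw [hyeq, norm_sub_rev] at h1
  have h4 := norm_sub_le_norm_sub_add_norm_sub (R (M tskip (g (L y))))
    (R (M (tskip + δ) (L x))) (R (M (tskip + δ) (g (L x))))
  have h5 : c * ‖y - ystar‖ ≤ 2 * CR * C₀ * Real.exp (-K * tskip) := by linarith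
  rw [div_mul_eq_mul_div, le_div_iff₀ hc]
  linarith
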